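/- arXiv:1302.0925 — 5 statements merged into one kernel-verified Lean document; each statement's English description precedes it below -/
import Mathlib

section
/- Let N > 0 and let k = (k1,k2,k3) ∈ ℤ³ with k3 ≠ 0. Suppose u ∈ ℂ³, b ∈ ℂ³, P ∈ ℂ, θ ∈ ℂ satisfy the Fourier-transformed magnetostrophic balance (with the convention that ∇ corresponds to multiplication by i k): N²(u × e3) = −i k P + i k2 b + N² θ e3, i k2 u − |k|² b = 0, k·u = 0, and k·b = 0, where e3 = (0,0,1) and |k|² = k1² + k2² + k3². Then u is uniquely determined by θ via u_j = M̂_j(k) θ for j = 1,2,3, where M̂_1(k) = (N⁴ k2 k3 |k|² − N² k1 k2² k3)/D(k), M̂_2(k) = (−N⁴ k1 k3 |k|² − N² k2³ k3)/D(k), M̂_3(k) = (N² k1² k2² + N² k2⁴)/D(k), and D(k) = N⁴ |k|² k3² + k2⁴. -/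
/-!
Crossing the momentum balance with `k` removes the pressure gradient and leaves
`(k·Ω) u = iβ k × b + k × f`. Eliminating `b` by the induction equation in this identity, and in its
cross product with `k`, gives a linear system for the velocity `u` and the vorticity `k × u`:
`|k|² (k·Ω) u + β² (k × u) = |k|² k × f` and `(k·Ω) (k × u) - β² u = k × (k × f)`.
Its determinant `|k|² (k·Ω)² + β⁴` becomes the denominator of the MG symbols for
`Ω = N² e₃`, `f = N² θ e₃` and `β = k₂`.
-/

open Matrix

section Vectors

variable {R : Type*} [CommRing R]

theorem cross_cross_self_of_dotProduct_eq_zero {k v : Fin 3 → R} (h : k ⬝ᵥ v = 0) :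
    k ⨯₃ (k ⨯₃ v) = -((k ⬝ᵥ k) • v) := by
  rw [cross_cross_eq_smul_sub_smul', h, zero_smul, zero_sub]

theorem cross_cross_of_dotProduct_eq_zero {k v : Fin 3 → R} (h : k ⬝ᵥ v = 0) (w : Fin 3 → R) :
    k ⨯₃ (v ⨯₃ w) = (k ⬝ᵥ w) • v := by
  rw [cross_cross_eq_smul_sub_smul', dotProduct_comm v k, h, zero_smul, sub_zero]

end Vectors

/-- The magnetostrophic balance at wave vector `k` between a velocity `u`, a magnetic perturbation
`b` and a pressure `P`, for an arbitrary rotation vector `Ω` and body force `f`. The imaginary unit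
is the parameter `i`, and `β` stands for `k · B`, where `B` is the uniform background field. -/
structure MagnetostrophicBalance {R : Type*} [CommRing R] (i : R) (k Ω f : Fin 3 → R) (β : R)
    (u b : Fin 3 → R) (P : R) : Prop where
  momentum : u ⨯₃ Ω = -(i * P) • k + (i * β) • b + f
  induction : (i * β) • u = (k ⬝ᵥ k) • b
  div_velocity : k ⬝ᵥ u = 0
  div_magnetic : k ⬝ᵥ b = 0

/-- The determinant of the linear system for velocity and vorticity that remains once pressure and
magnetic field are eliminated from the magnetostrophic balance. -/
def magnetostrophicDet {R : Type*} [CommRing R] (k Ω : Fin 3 → R) (β : R) : R :=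
  (k ⬝ᵥ k) * (k ⬝ᵥ Ω) ^ 2 + β ^ 4

/-- The velocity driven by the body force `f` at wave vector `k`: Cramer's rule for the linear
system with determinant `magnetostrophicDet k Ω β`. It is `0` where that determinant vanishes. -/
def magnetostrophicVelocity {F : Type*} [Field F] (k Ω f : Fin 3 → F) (β : F) : Fin 3 → F :=
  (magnetostrophicDet k Ω β)⁻¹ •
    (((k ⬝ᵥ k) * (k ⬝ᵥ Ω)) • (k ⨯₃ f) - β ^ 2 • (k ⨯₃ (k ⨯₃ f)))

namespace MagnetostrophicBalance

variable {R : Type*} [CommRing R] {i β P : R} {k Ω f u b : Fin 3 → R}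

theorem curl_momentum (h : MagnetostrophicBalance i k Ω f β u b P) :
    (k ⬝ᵥ Ω) • u = (i * β) • (k ⨯₃ b) + k ⨯₃ f := by
  rw [← cross_cross_of_dotProduct_eq_zero h.div_velocity, h.momentum]
  simp only [map_add, map_smul, cross_self, smul_zero, zero_add]

theorem smul_velocity_add_smul_vorticity (h : MagnetostrophicBalance i k Ω f β u b P)
    (hi : i ^ 2 = -1) :
    ((k ⬝ᵥ k) * (k ⬝ᵥ Ω)) • u + β ^ 2 • (k ⨯₃ u) = (k ⬝ᵥ k) • (k ⨯₃ f) := by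
  have curl_induction : (i * β) • (k ⨯₃ u) = (k ⬝ᵥ k) • (k ⨯₃ b) := by
    simpa only [map_smul] using congrArg (k ⨯₃ ·) h.induction
  linear_combination (norm := module)
    (k ⬝ᵥ k) • h.curl_momentum - (i * β) • curl_induction + hi • (β ^ 2 • (k ⨯₃ u))

theorem smul_vorticity_sub_smul_velocity (h : MagnetostrophicBalance i k Ω f β u b P)
    (hi : i ^ 2 = -1) :
    (k ⬝ᵥ Ω) • (k ⨯₃ u) - β ^ 2 • u = k ⨯₃ (k ⨯₃ f) := by
  have curl_curl_momentum :
      (k ⬝ᵥ Ω) • (k ⨯₃ u) = -((i * β) • ((k ⬝ᵥ k) • b)) + k ⨯₃ (k ⨯₃ f) := by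
    simpa only [map_smul, map_add, cross_cross_self_of_dotProduct_eq_zero h.div_magnetic, smul_neg]
      using congrArg (k ⨯₃ ·) h.curl_momentum
  linear_combination (norm := module)
    curl_curl_momentum + (i * β) • h.induction - hi • (β ^ 2 • u)

theorem det_smul_velocity (h : MagnetostrophicBalance i k Ω f β u b P) (hi : i ^ 2 = -1) :
    magnetostrophicDet k Ω β • u =
      ((k ⬝ᵥ k) * (k ⬝ᵥ Ω)) • (k ⨯₃ f) - β ^ 2 • (k ⨯₃ (k ⨯₃ f)) := by
  rw [magnetostrophicDet]
  linear_combination (norm := module)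
    (k ⬝ᵥ Ω) • h.smul_velocity_add_smul_vorticity hi
      - β ^ 2 • h.smul_vorticity_sub_smul_velocity hi

theorem of_components {N k1 k2 k3 θ : R}
    (hbal : ∀ j : Fin 3, N ^ 2 * (u ⨯₃ ![0, 0, 1]) j =
      -i * ![k1, k2, k3] j * P + i * k2 * b j + N ^ 2 * θ * ![0, 0, 1] j)
    (hind : ∀ j : Fin 3, i * k2 * u j - (k1 ^ 2 + k2 ^ 2 + k3 ^ 2) * b j = 0)
    (hdivu : k1 * u 0 + k2 * u 1 + k3 * u 2 = 0) (hdivb : k1 * b 0 + k2 * b 1 + k3 * b 2 = 0) :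
    MagnetostrophicBalance i ![k1, k2, k3] (N ^ 2 • ![0, 0, 1]) ((N ^ 2 * θ) • ![0, 0, 1]) k2
      u b P where
  momentum := by
    ext j
    simp only [map_smul, Pi.add_apply, Pi.smul_apply, smul_eq_mul]
    linear_combination hbal j
  induction := by
    ext j
    simp only [vec3_dotProduct, Pi.smul_apply, smul_eq_mul, cons_val]
    linear_combination hind j
  div_velocity := by simpa only [vec3_dotProduct, cons_val] using hdivu
  div_magnetic := by simpa only [vec3_dotProduct, cons_val] using hdivb

end MagnetostrophicBalance

theorem magnetostrophicDet_vertical {R : Type*} [CommRing R] (N k1 k2 k3 : R) :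
    magnetostrophicDet ![k1, k2, k3] (N ^ 2 • ![0, 0, 1]) k2 =
      N ^ 4 * (k1 ^ 2 + k2 ^ 2 + k3 ^ 2) * k3 ^ 2 + k2 ^ 4 := by
  simp only [magnetostrophicDet, dotProduct_smul, vec3_dotProduct, smul_eq_mul, cons_val]
  ring

theorem magnetostrophicDet_vertical_ne_zero {N k3 : ℝ} (hN : N ≠ 0) (k1 k2 : ℝ) (hk3 : k3 ≠ 0) :
    magnetostrophicDet ![(k1 : ℂ), k2, k3] ((N : ℂ) ^ 2 • ![0, 0, 1]) k2 ≠ 0 := by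
  have hpos : 0 < N ^ 4 * (k1 ^ 2 + k2 ^ 2 + k3 ^ 2) * k3 ^ 2 + k2 ^ 4 := by positivity
  rw [magnetostrophicDet_vertical]
  exact_mod_cast hpos.ne'

theorem magnetostrophicVelocity_vertical {F : Type*} [Field F] (N k1 k2 k3 θ : F) :
    magnetostrophicVelocity ![k1, k2, k3] (N ^ 2 • ![0, 0, 1]) ((N ^ 2 * θ) • ![0, 0, 1]) k2 =
      ![(N ^ 4 * k2 * k3 * (k1 ^ 2 + k2 ^ 2 + k3 ^ 2) - N ^ 2 * k1 * k2 ^ 2 * k3)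
          / (N ^ 4 * (k1 ^ 2 + k2 ^ 2 + k3 ^ 2) * k3 ^ 2 + k2 ^ 4) * θ,
        (-N ^ 4 * k1 * k3 * (k1 ^ 2 + k2 ^ 2 + k3 ^ 2) - N ^ 2 * k2 ^ 3 * k3)
          / (N ^ 4 * (k1 ^ 2 + k2 ^ 2 + k3 ^ 2) * k3 ^ 2 + k2 ^ 4) * θ,
        (N ^ 2 * k1 ^ 2 * k2 ^ 2 + N ^ 2 * k2 ^ 4)
          / (N ^ 4 * (k1 ^ 2 + k2 ^ 2 + k3 ^ 2) * k3 ^ 2 + k2 ^ 4) * θ] := by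
  rw [magnetostrophicVelocity, magnetostrophicDet_vertical]
  simp only [cross_apply, vec3_dotProduct, smul_eq_mul, cons_val, smul_cons, smul_empty,
    cons_sub_cons, sub_self]
  refine vec3_eq ?_ ?_ ?_ <;> ring

theorem mg_symbol_determined_by_balance_general {F : Type*} [Field F] {i β P : F}
    {k Ω f u b : Fin 3 → F} (hi : i ^ 2 = -1) (hD : magnetostrophicDet k Ω β ≠ 0)
    (h : MagnetostrophicBalance i k Ω f β u b P) : u = magnetostrophicVelocity k Ω f β := by
  rw [magnetostrophicVelocity, eq_inv_smul_iff₀ hD, h.det_smul_velocity hi]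

/-- **Fourier-side magnetostrophic balance determines the velocity.**
Let `N > 0` and `k = (k1,k2,k3) ∈ ℤ³` with `k3 ≠ 0`.  If `u, b ∈ ℂ³`, `P, θ ∈ ℂ`
satisfy the Fourier-transformed magnetostrophic balance
`N²(u × e3) = −i k P + i k2 b + N² θ e3`, `i k2 u − |k|² b = 0`, `k·u = 0`, `k·b = 0`,
then `u_j = M̂_j(k) θ` for `j = 1,2,3`, with the MG symbols `M̂_j`. -/
theorem mg_symbol_determined_by_balance
    (N : ℝ) (hN : 0 < N) (k1 k2 k3 : ℤ) (hk3 : k3 ≠ 0)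
    (u b : Fin 3 → ℂ) (P θ : ℂ)
    (hbal : ∀ i : Fin 3,
      (N : ℂ) ^ 2 * crossProduct u ![(0 : ℂ), 0, 1] i =
        -Complex.I * (![(k1 : ℂ), (k2 : ℂ), (k3 : ℂ)] i) * P
          + Complex.I * (k2 : ℂ) * b i
          + (N : ℂ) ^ 2 * θ * (![(0 : ℂ), 0, 1] i))
    (hind : ∀ i : Fin 3,
      Complex.I * (k2 : ℂ) * u i
        - ((k1 : ℂ) ^ 2 + (k2 : ℂ) ^ 2 + (k3 : ℂ) ^ 2) * b i = 0)
    (hdivu : (k1 : ℂ) * u 0 + (k2 : ℂ) * u 1 + (k3 : ℂ) * u 2 = 0)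
    (hdivb : (k1 : ℂ) * b 0 + (k2 : ℂ) * b 1 + (k3 : ℂ) * b 2 = 0) :
    u 0 = ((N : ℂ) ^ 4 * (k2 : ℂ) * (k3 : ℂ) * ((k1 : ℂ) ^ 2 + (k2 : ℂ) ^ 2 + (k3 : ℂ) ^ 2)
            - (N : ℂ) ^ 2 * (k1 : ℂ) * (k2 : ℂ) ^ 2 * (k3 : ℂ))
          / ((N : ℂ) ^ 4 * ((k1 : ℂ) ^ 2 + (k2 : ℂ) ^ 2 + (k3 : ℂ) ^ 2) * (k3 : ℂ) ^ 2
            + (k2 : ℂ) ^ 4) * θ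
    ∧ u 1 = (-(N : ℂ) ^ 4 * (k1 : ℂ) * (k3 : ℂ) * ((k1 : ℂ) ^ 2 + (k2 : ℂ) ^ 2 + (k3 : ℂ) ^ 2)
            - (N : ℂ) ^ 2 * (k2 : ℂ) ^ 3 * (k3 : ℂ))
          / ((N : ℂ) ^ 4 * ((k1 : ℂ) ^ 2 + (k2 : ℂ) ^ 2 + (k3 : ℂ) ^ 2) * (k3 : ℂ) ^ 2
            + (k2 : ℂ) ^ 4) * θ
    ∧ u 2 = ((N : ℂ) ^ 2 * (k1 : ℂ) ^ 2 * (k2 : ℂ) ^ 2 + (N : ℂ) ^ 2 * (k2 : ℂ) ^ 4)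
          / ((N : ℂ) ^ 4 * ((k1 : ℂ) ^ 2 + (k2 : ℂ) ^ 2 + (k3 : ℂ) ^ 2) * (k3 : ℂ) ^ 2
            + (k2 : ℂ) ^ 4) * θ := by
  have hD := magnetostrophicDet_vertical_ne_zero hN.ne' k1 k2 (Int.cast_ne_zero.mpr hk3)
  rw [mg_symbol_determined_by_balance_general Complex.I_sq (mod_cast hD)
    (.of_components hbal hind hdivu hdivb), magnetostrophicVelocity_vertical]
  exact ⟨rfl, rfl, rfl⟩
end

section
/- There is a constant C = 2, independent of N, such that for every N > 0, every k = (k1,k2,k3) ∈ ℤ³ with k3 ≠ 0, and every j ∈ {1,2,3}, one has |M̂_j(k)| ≤ 2 √(k1² + k2² + k3²). In other words, the MG symbol grows at most linearly in |k|, uniformly in N. -/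
/-- `|k|²` for `k = (k1,k2,k3) ∈ ℤ³`, as a real number. -/
noncomputable def kSq (k1 k2 k3 : ℤ) : ℝ := (k1 : ℝ) ^ 2 + (k2 : ℝ) ^ 2 + (k3 : ℝ) ^ 2

/-- The denominator `D(k) = N⁴|k|²k3² + k2⁴` of the MG symbols. -/
noncomputable def Dmg (N : ℝ) (k1 k2 k3 : ℤ) : ℝ :=
  N ^ 4 * kSq k1 k2 k3 * (k3 : ℝ) ^ 2 + (k2 : ℝ) ^ 4

/-- The first magnetogeostrophic symbol `M̂₁(k)`. -/
noncomputable def Mhat1 (N : ℝ) (k1 k2 k3 : ℤ) : ℝ :=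
  if k3 = 0 then 0 else
    (N ^ 4 * (k2 : ℝ) * (k3 : ℝ) * kSq k1 k2 k3
      - N ^ 2 * (k1 : ℝ) * (k2 : ℝ) ^ 2 * (k3 : ℝ)) / Dmg N k1 k2 k3

/-- The second magnetogeostrophic symbol `M̂₂(k)`. -/
noncomputable def Mhat2 (N : ℝ) (k1 k2 k3 : ℤ) : ℝ :=
  if k3 = 0 then 0 else
    (-N ^ 4 * (k1 : ℝ) * (k3 : ℝ) * kSq k1 k2 k3
      - N ^ 2 * (k2 : ℝ) ^ 3 * (k3 : ℝ)) / Dmg N k1 k2 k3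

/-- The third magnetogeostrophic symbol `M̂₃(k)`. -/
noncomputable def Mhat3 (N : ℝ) (k1 k2 k3 : ℤ) : ℝ :=
  if k3 = 0 then 0 else
    (N ^ 2 * (k1 : ℝ) ^ 2 * (k2 : ℝ) ^ 2 + N ^ 2 * (k2 : ℝ) ^ 4) / Dmg N k1 k2 k3

/-!
The three symbols form a vector whose squared Euclidean length collapses to a single fraction.
Brahmagupta's identity factors the horizontal part of the numerator, and adding the vertical part
produces `D(k)` as a factor, leaving `|M̂(k)|² = N⁴ |k|² (k1² + k2²) / D(k)`. Discarding `k2⁴`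
from the denominator cancels `N⁴ |k|²`, so `|M̂(k)| ≤ √(k1² + k2²) / |k3|`, and `|k3| ≥ 1` because
`k` is a lattice point.
-/

/-- The vector-valued magnetogeostrophic symbol `M̂(k) = (M̂₁(k), M̂₂(k), M̂₃(k))`, given the
Euclidean norm so that the three components are estimated together. -/
noncomputable def mgSymbol (N : ℝ) (k1 k2 k3 : ℤ) : EuclideanSpace ℝ (Fin 3) :=
  !₂[Mhat1 N k1 k2 k3, Mhat2 N k1 k2 k3, Mhat3 N k1 k2 k3]

section Symbol

variable {N : ℝ} {k1 k2 k3 : ℤ}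

lemma kSq_pos (hk3 : k3 ≠ 0) : 0 < kSq k1 k2 k3 := by
  unfold kSq
  positivity

lemma Dmg_pos (hN : N ≠ 0) (hk3 : k3 ≠ 0) : 0 < Dmg N k1 k2 k3 := by
  have hk : 0 < kSq k1 k2 k3 := kSq_pos hk3
  unfold Dmg
  positivity

lemma Mhat1_sq_add_Mhat2_sq (hk3 : k3 ≠ 0) :
    Mhat1 N k1 k2 k3 ^ 2 + Mhat2 N k1 k2 k3 ^ 2 =
      N ^ 4 * (k3 : ℝ) ^ 2 * (N ^ 4 * kSq k1 k2 k3 ^ 2 + (k2 : ℝ) ^ 4) *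
        ((k1 : ℝ) ^ 2 + (k2 : ℝ) ^ 2) / Dmg N k1 k2 k3 ^ 2 := by
  calc Mhat1 N k1 k2 k3 ^ 2 + Mhat2 N k1 k2 k3 ^ 2
      = N ^ 4 * (k3 : ℝ) ^ 2 *
          ((N ^ 2 * kSq k1 k2 k3 * k2 - (k2 : ℝ) ^ 2 * k1) ^ 2 +
            (N ^ 2 * kSq k1 k2 k3 * k1 + (k2 : ℝ) ^ 2 * k2) ^ 2) / Dmg N k1 k2 k3 ^ 2 := by
        simp only [Mhat1, Mhat2, if_neg hk3, div_pow, ← add_div]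
        ring
    _ = _ := by
        rw [← sq_add_sq_mul_sq_add_sq]
        ring

lemma norm_mgSymbol_sq (hN : N ≠ 0) (hk3 : k3 ≠ 0) :
    ‖mgSymbol N k1 k2 k3‖ ^ 2 =
      N ^ 4 * kSq k1 k2 k3 * ((k1 : ℝ) ^ 2 + (k2 : ℝ) ^ 2) / Dmg N k1 k2 k3 := by
  have hD : Dmg N k1 k2 k3 ≠ 0 := (Dmg_pos hN hk3).ne'
  have numerator_eq :
      N ^ 4 * (k3 : ℝ) ^ 2 * (N ^ 4 * kSq k1 k2 k3 ^ 2 + (k2 : ℝ) ^ 4) *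
          ((k1 : ℝ) ^ 2 + (k2 : ℝ) ^ 2) +
        (N ^ 2 * (k1 : ℝ) ^ 2 * (k2 : ℝ) ^ 2 + N ^ 2 * (k2 : ℝ) ^ 4) ^ 2 =
      N ^ 4 * kSq k1 k2 k3 * ((k1 : ℝ) ^ 2 + (k2 : ℝ) ^ 2) * Dmg N k1 k2 k3 := by
    simp only [Dmg, kSq]
    ring
  calc ‖mgSymbol N k1 k2 k3‖ ^ 2
      = Mhat1 N k1 k2 k3 ^ 2 + Mhat2 N k1 k2 k3 ^ 2 + Mhat3 N k1 k2 k3 ^ 2 := by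
        simp [mgSymbol, EuclideanSpace.real_norm_sq_eq, Fin.sum_univ_three]
    _ = N ^ 4 * kSq k1 k2 k3 * ((k1 : ℝ) ^ 2 + (k2 : ℝ) ^ 2) * Dmg N k1 k2 k3 /
          Dmg N k1 k2 k3 ^ 2 := by
        rw [Mhat1_sq_add_Mhat2_sq hk3, Mhat3, if_neg hk3, div_pow, ← add_div, numerator_eq]
    _ = N ^ 4 * kSq k1 k2 k3 * ((k1 : ℝ) ^ 2 + (k2 : ℝ) ^ 2) / Dmg N k1 k2 k3 := by
        rw [sq (Dmg N k1 k2 k3), mul_div_mul_right _ _ hD]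

lemma norm_mgSymbol_le_sqrt_div_abs (hN : N ≠ 0) (hk3 : k3 ≠ 0) :
    ‖mgSymbol N k1 k2 k3‖ ≤ √((k1 : ℝ) ^ 2 + (k2 : ℝ) ^ 2) / |(k3 : ℝ)| := by
  have hk : 0 < kSq k1 k2 k3 := kSq_pos hk3
  rw [← Real.sqrt_sq_eq_abs, ← Real.sqrt_div' _ (sq_nonneg _)]
  apply Real.le_sqrt_of_sq_le
  calc ‖mgSymbol N k1 k2 k3‖ ^ 2
      = N ^ 4 * kSq k1 k2 k3 * ((k1 : ℝ) ^ 2 + (k2 : ℝ) ^ 2) / Dmg N k1 k2 k3 :=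
        norm_mgSymbol_sq hN hk3
    _ ≤ N ^ 4 * kSq k1 k2 k3 * ((k1 : ℝ) ^ 2 + (k2 : ℝ) ^ 2) /
          (N ^ 4 * kSq k1 k2 k3 * (k3 : ℝ) ^ 2) := by
        gcongr
        exact le_add_of_nonneg_right (by positivity)
    _ = ((k1 : ℝ) ^ 2 + (k2 : ℝ) ^ 2) / (k3 : ℝ) ^ 2 :=
        mul_div_mul_left _ _ (by positivity)

lemma mgSymbol_zero_right : mgSymbol N k1 k2 0 = 0 := by
  ext j
  fin_cases j <;> simp [mgSymbol, Mhat1, Mhat2, Mhat3]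

end Symbol

theorem mg_symbol_linear_growth_general {N : ℝ} (hN : N ≠ 0) (k1 k2 k3 : ℤ) :
    ‖mgSymbol N k1 k2 k3‖ ≤ √(kSq k1 k2 k3) := by
  obtain rfl | hk3 := eq_or_ne k3 0
  · rw [mgSymbol_zero_right, norm_zero]
    exact Real.sqrt_nonneg _
  · have one_le_abs_k3 : 1 ≤ |(k3 : ℝ)| := mod_cast Int.one_le_abs hk3
    calc ‖mgSymbol N k1 k2 k3‖
        ≤ √((k1 : ℝ) ^ 2 + (k2 : ℝ) ^ 2) / |(k3 : ℝ)| := norm_mgSymbol_le_sqrt_div_abs hN hk3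
      _ ≤ √((k1 : ℝ) ^ 2 + (k2 : ℝ) ^ 2) := div_le_self (Real.sqrt_nonneg _) one_le_abs_k3
      _ ≤ √(kSq k1 k2 k3) := Real.sqrt_le_sqrt (le_add_of_nonneg_right (sq_nonneg _))

/-- **Linear growth of the MG symbols, uniformly in `N`:** for every `N > 0` and every
`k = (k1,k2,k3) ∈ ℤ³` with `k3 ≠ 0`, each symbol satisfies
`|M̂_j(k)| ≤ 2 √(k1² + k2² + k3²)`, with the constant `2` independent of `N`. -/
theorem mg_symbol_linear_growth (N : ℝ) (hN : 0 < N) (k1 k2 k3 : ℤ) (hk3 : k3 ≠ 0) :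
    |Mhat1 N k1 k2 k3| ≤ 2 * Real.sqrt (kSq k1 k2 k3)
    ∧ |Mhat2 N k1 k2 k3| ≤ 2 * Real.sqrt (kSq k1 k2 k3)
    ∧ |Mhat3 N k1 k2 k3| ≤ 2 * Real.sqrt (kSq k1 k2 k3) := by
  have component_le (j : Fin 3) : |mgSymbol N k1 k2 k3 j| ≤ 2 * √(kSq k1 k2 k3) :=
    (PiLp.norm_apply_le _ j).trans <| (mg_symbol_linear_growth_general hN.ne' k1 k2 k3).trans <|
      le_mul_of_one_le_left (Real.sqrt_nonneg _) one_le_two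
  exact ⟨component_le 0, component_le 1, component_le 2⟩
end

section
/- The MG symbol M̂_3 is unbounded along the curved regions where k3 = O(1) and k2 = O(|k1|^r) with 0 < r ≤ 1/2: for every N > 0 and every r ∈ (0, 1/2], the sequence of frequencies k^{(j)} = (j, ⌊j^r⌋, 1), j ≥ 1, satisfies M̂_3(k^{(j)}) → ∞ as j → ∞. -/
/-!
For `k₂, k₃ ≠ 0` the reciprocal of `M̂₃` splits as
`1 / M̂₃ = N² (k₃ / k₂)² (1 + k₃² / (k₁² + k₂²)) + k₂² / (N² (k₁² + k₂²))`.
Both terms are positive and tend to zero when `k₃ ≪ k₂ ≪ k₁`, so `M̂₃` blows up whenever the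
three frequencies separate. On `k = (j, ⌊jʳ⌋, k₃)` with `k₃` fixed this happens for all
`0 < r < 1`.
-/

open Asymptotics Filter Topology

theorem inv_mhat3_eq {N : ℝ} (hN : N ≠ 0) (k1 : ℤ) {k2 k3 : ℤ} (hk2 : k2 ≠ 0) (hk3 : k3 ≠ 0) :
    (Mhat3 N k1 k2 k3)⁻¹ =
      N ^ 2 * (k3 / k2 : ℝ) ^ 2 * (1 + (k3 : ℝ) ^ 2 / ((k1 : ℝ) ^ 2 + (k2 : ℝ) ^ 2)) +
        (k2 : ℝ) ^ 2 / (N ^ 2 * ((k1 : ℝ) ^ 2 + (k2 : ℝ) ^ 2)) := by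
  have hk2' : (k2 : ℝ) ≠ 0 := Int.cast_ne_zero.mpr hk2
  have hsq : (k1 : ℝ) ^ 2 + (k2 : ℝ) ^ 2 ≠ 0 := by positivity
  have hnum : N ^ 2 * (k1 : ℝ) ^ 2 * (k2 : ℝ) ^ 2 + N ^ 2 * (k2 : ℝ) ^ 4 =
      N ^ 2 * (k2 : ℝ) ^ 2 * ((k1 : ℝ) ^ 2 + (k2 : ℝ) ^ 2) := by ring
  simp only [Mhat3, Dmg, kSq, if_neg hk3, inv_div]
  rw [hnum]
  field_simp

theorem inv_mhat3_pos {N : ℝ} (hN : N ≠ 0) (k1 : ℤ) {k2 k3 : ℤ} (hk2 : k2 ≠ 0) (hk3 : k3 ≠ 0) :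
    0 < (Mhat3 N k1 k2 k3)⁻¹ := by
  rw [inv_mhat3_eq hN k1 hk2 hk3]
  positivity

theorem inv_mhat3_le {N : ℝ} (hN : N ≠ 0) {k1 k2 k3 : ℤ} (hk1 : k1 ≠ 0) (hk2 : k2 ≠ 0)
    (hk3 : k3 ≠ 0) :
    (Mhat3 N k1 k2 k3)⁻¹ ≤
      N ^ 2 * (k3 / k2 : ℝ) ^ 2 * (1 + (k3 / k2 : ℝ) ^ 2) + (k2 / k1 : ℝ) ^ 2 / N ^ 2 := by
  rw [inv_mhat3_eq hN k1 hk2 hk3, mul_comm (N ^ 2) ((k1 : ℝ) ^ 2 + _), ← div_div,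
    div_pow (k3 : ℝ), div_pow (k2 : ℝ)]
  gcongr
  · exact le_add_of_nonneg_left (sq_nonneg _)
  · exact le_add_of_nonneg_right (sq_nonneg _)

theorem eventually_ne_zero_of_isBigO {ι E F : Type*} [NormedAddCommGroup E]
    [NormedAddCommGroup F] {l : Filter ι} {f : ι → E} {g : ι → F} (h : f =O[l] g)
    (hf : ∀ᶠ i in l, f i ≠ 0) : ∀ᶠ i in l, g i ≠ 0 :=
  hf.mp (h.eq_zero_imp.mono fun _ => mt)

theorem tendsto_mhat3_atTop_of_isLittleO {ι : Type*} {l : Filter ι} {N : ℝ} (hN : N ≠ 0)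
    {k1 k2 k3 : ι → ℤ} (hk3 : ∀ᶠ i in l, k3 i ≠ 0)
    (h32 : (fun i => (k3 i : ℝ)) =o[l] fun i => (k2 i : ℝ))
    (h21 : (fun i => (k2 i : ℝ)) =o[l] fun i => (k1 i : ℝ)) :
    Tendsto (fun i => Mhat3 N (k1 i) (k2 i) (k3 i)) l atTop := by
  have hk2 : ∀ᶠ i in l, k2 i ≠ 0 := by
    exact_mod_cast eventually_ne_zero_of_isBigO h32.isBigO (by exact_mod_cast hk3)
  have hk1 : ∀ᶠ i in l, k1 i ≠ 0 := by
    exact_mod_cast eventually_ne_zero_of_isBigO h21.isBigO (by exact_mod_cast hk2)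
  have hbound : Tendsto (fun i => N ^ 2 * (k3 i / k2 i : ℝ) ^ 2 * (1 + (k3 i / k2 i : ℝ) ^ 2) +
      (k2 i / k1 i : ℝ) ^ 2 / N ^ 2) l (𝓝 0) := by
    have ha := h32.tendsto_div_nhds_zero.pow 2
    have hb := h21.tendsto_div_nhds_zero.pow 2
    simpa using ((ha.const_mul (N ^ 2)).mul (ha.const_add 1)).add (hb.div_const (N ^ 2))
  have hpos : ∀ᶠ i in l, 0 < (Mhat3 N (k1 i) (k2 i) (k3 i))⁻¹ := by
    filter_upwards [hk2, hk3] with i h2 h3 using inv_mhat3_pos hN _ h2 h3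
  have hzero : Tendsto (fun i => (Mhat3 N (k1 i) (k2 i) (k3 i))⁻¹) l (𝓝 0) := by
    refine tendsto_of_tendsto_of_tendsto_of_le_of_le' tendsto_const_nhds hbound
      (hpos.mono fun _ => le_of_lt) ?_
    filter_upwards [hk1, hk2, hk3] with i h1 h2 h3 using inv_mhat3_le hN h1 h2 h3
  simpa only [Pi.inv_def, inv_inv] using
    (tendsto_nhdsWithin_iff.mpr ⟨hzero, hpos⟩).inv_tendsto_nhdsGT_zero

theorem isLittleO_rpow_rpow_atTop {r s : ℝ} (hrs : r < s) :
    (fun x : ℝ => x ^ r) =o[atTop] fun x => x ^ s := by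
  refine isLittleO_of_tendsto' ?_ ((tendsto_rpow_neg_atTop (sub_pos.mpr hrs)).congr' ?_)
  · filter_upwards [eventually_gt_atTop 0] with x hx h
    exact absurd h (Real.rpow_pos_of_pos hx s).ne'
  · filter_upwards [eventually_gt_atTop 0] with x hx
    rw [neg_sub, Real.rpow_sub hx]

theorem isBigO_intFloor_atTop : (fun x : ℝ => (⌊x⌋ : ℝ)) =O[atTop] fun x => x := by
  refine IsBigO.of_norm_eventuallyLE ?_
  filter_upwards [eventually_ge_atTop 0] with x hx
  rw [Real.norm_of_nonneg (Int.cast_nonneg (Int.floor_nonneg.mpr hx))]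
  exact Int.floor_le x

theorem mg_symbol3_unbounded_on_curved_region_general {N : ℝ} (hN : N ≠ 0) {r : ℝ}
    (hr : r ∈ Set.Ioo (0 : ℝ) 1) {k3 : ℤ} (hk3 : k3 ≠ 0) :
    Tendsto (fun j : ℕ => Mhat3 N (j : ℤ) ⌊(j : ℝ) ^ r⌋ k3) atTop atTop := by
  have hpow : Tendsto (fun j : ℕ => (j : ℝ) ^ r) atTop atTop :=
    (tendsto_rpow_atTop hr.1).comp tendsto_natCast_atTop_atTop
  have hfloor : Tendsto (fun j : ℕ => (⌊(j : ℝ) ^ r⌋ : ℝ)) atTop atTop :=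
    tendsto_intCast_atTop_atTop.comp (tendsto_floor_atTop.comp hpow)
  have h32 : (fun _ : ℕ => (k3 : ℝ)) =o[atTop] fun j : ℕ => (⌊(j : ℝ) ^ r⌋ : ℝ) :=
    isLittleO_const_left.mpr (.inr (tendsto_norm_atTop_atTop.comp hfloor))
  have h21 : (fun j : ℕ => (⌊(j : ℝ) ^ r⌋ : ℝ)) =o[atTop] fun j : ℕ => ((j : ℤ) : ℝ) := by
    simpa using! (isBigO_intFloor_atTop.comp_tendsto hpow).trans_isLittleO
      ((isLittleO_rpow_rpow_atTop hr.2).comp_tendsto tendsto_natCast_atTop_atTop)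
  exact tendsto_mhat3_atTop_of_isLittleO hN (.of_forall fun _ => hk3) h32 h21

/-- **Unboundedness of `M̂₃` along curved frequency regions:** for every `N > 0` and every
`r ∈ (0, 1/2]`, the sequence of frequencies `k⁽ʲ⁾ = (j, ⌊jʳ⌋, 1)` satisfies
`M̂₃(k⁽ʲ⁾) → ∞` as `j → ∞`. -/
theorem mg_symbol3_unbounded_on_curved_region (N : ℝ) (hN : 0 < N)
    (r : ℝ) (hr : r ∈ Set.Ioc (0 : ℝ) (1 / 2)) :
    Filter.Tendsto (fun j : ℕ => Mhat3 N (j : ℤ) ⌊(j : ℝ) ^ r⌋ 1)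
      Filter.atTop Filter.atTop := by
  exact mg_symbol3_unbounded_on_curved_region_general hN.ne' ⟨hr.1, by linarith [hr.2]⟩ one_ne_zero
end

section
/- For every N > 0 and every nonzero rational q there exists a constant C = C(q, N) < ∞ such that for all k = (k1,k2,k3) ∈ ℤ³ lying on the frequency plane P_q = {k ∈ ℤ³ : k2 = q·k1} and having k3 ≠ 0, one has |M̂_j(k)| ≤ C for j = 1,2,3. That is, the MG symbols are uniformly bounded on each rational frequency plane P_q with q ≠ 0. -/
/-!
The numerators of the symbols and the denominator `D(k)` are all quartic in `k`, so it suffices that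
`D(k)` is at least a constant multiple of `|k|⁴`. The two terms of `D(k)` control `|k|² k3²` and
`k2⁴`, so only the size of `k1` is missing, and on the plane it is a fixed multiple of the size of
`k2`. The same argument works on the whole cone `|k1| ≤ a |k2|`.
-/

theorem abs_mul_le_sq_add_sq {R : Type*} [CommRing R] [LinearOrder R] [IsStrictOrderedRing R]
    (x y : R) : |x * y| ≤ x ^ 2 + y ^ 2 := by
  have htwo : 2 * |x * y| ≤ x ^ 2 + y ^ 2 := by
    simpa only [abs_mul, mul_assoc, sq_abs] using two_mul_le_add_sq |x| |y|
  linarith [abs_nonneg (x * y)]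

theorem abs_eq_inv_mul_abs_of_eq_mul {K : Type*} [Field K] [LinearOrder K] [IsStrictOrderedRing K]
    {q x y : K} (hq : q ≠ 0) (h : y = q * x) : |x| = |q|⁻¹ * |y| := by
  rw [h, abs_mul, inv_mul_cancel_left₀ (abs_ne_zero.mpr hq)]

/-- The uniform bound on the MG symbols over the cone `|k1| ≤ a |k2|`: the factor `N⁴ + N²` comes
from the numerators, the other one bounds `|k|⁴ / D(k)`. -/
noncomputable def mgConeBound (N a : ℝ) : ℝ :=
  (N ^ 4 + N ^ 2) * ((1 + a ^ 2) ^ 2 + 2 / N ^ 4)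

section

variable (N : ℝ) (k1 k2 k3 : ℤ)

theorem kSq_nonneg : 0 ≤ kSq k1 k2 k3 := by
  unfold kSq
  positivity

theorem Dmg_nonneg : 0 ≤ Dmg N k1 k2 k3 := by
  have := kSq_nonneg k1 k2 k3
  unfold Dmg
  positivity

theorem mgConeBound_nonneg (a : ℝ) : 0 ≤ mgConeBound N a := by
  unfold mgConeBound
  positivity

theorem abs_k1_mul_k3_le_kSq : |(k1 * k3 : ℝ)| ≤ kSq k1 k2 k3 := by
  unfold kSq
  linarith [abs_mul_le_sq_add_sq (k1 : ℝ) k3, sq_nonneg (k2 : ℝ)]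

theorem abs_k2_mul_k3_le_kSq : |(k2 * k3 : ℝ)| ≤ kSq k1 k2 k3 := by
  unfold kSq
  linarith [abs_mul_le_sq_add_sq (k2 : ℝ) k3, sq_nonneg (k1 : ℝ)]

theorem k1_sq_add_k2_sq_le_kSq : (k1 : ℝ) ^ 2 + (k2 : ℝ) ^ 2 ≤ kSq k1 k2 k3 :=
  le_add_of_nonneg_right (sq_nonneg _)

theorem k2_sq_le_kSq : (k2 : ℝ) ^ 2 ≤ kSq k1 k2 k3 :=
  (le_add_of_nonneg_left (sq_nonneg _)).trans (k1_sq_add_k2_sq_le_kSq k1 k2 k3)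

end

section

variable {N a : ℝ} {k1 k2 k3 : ℤ}

theorem kSq_sq_le_mul_Dmg (hN : N ≠ 0) (hk : |(k1 : ℝ)| ≤ a * |(k2 : ℝ)|) :
    kSq k1 k2 k3 ^ 2 ≤ ((1 + a ^ 2) ^ 2 + 2 / N ^ 4) * Dmg N k1 k2 k3 := by
  set s := kSq k1 k2 k3 with hs
  have hs0 : 0 ≤ s := kSq_nonneg k1 k2 k3
  have hk1 : (k1 : ℝ) ^ 2 ≤ a ^ 2 * (k2 : ℝ) ^ 2 := by
    calc (k1 : ℝ) ^ 2 = |(k1 : ℝ)| ^ 2 := (sq_abs _).symm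
      _ ≤ (a * |(k2 : ℝ)|) ^ 2 := by gcongr
      _ = a ^ 2 * (k2 : ℝ) ^ 2 := by rw [mul_pow, sq_abs]
  have hsle : s ≤ (1 + a ^ 2) * (k2 : ℝ) ^ 2 + (k3 : ℝ) ^ 2 := by
    rw [hs, kSq]
    linarith
  -- Young's inequality for `(1 + a ^ 2) * k2 ^ 2 * s`; half of `s ^ 2` is absorbed on the left.
  have habsorb : s ^ 2 ≤ (1 + a ^ 2) ^ 2 * (k2 : ℝ) ^ 4 + 2 * (s * (k3 : ℝ) ^ 2) := by
    linarith [mul_le_mul_of_nonneg_right hsle hs0,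
      two_mul_le_add_sq ((1 + a ^ 2) * (k2 : ℝ) ^ 2) s]
  have hexpand : ((1 + a ^ 2) ^ 2 + 2 / N ^ 4) * Dmg N k1 k2 k3 =
      (1 + a ^ 2) ^ 2 * (k2 : ℝ) ^ 4 + 2 * (s * (k3 : ℝ) ^ 2) +
        ((1 + a ^ 2) ^ 2 * (N ^ 4 * s * (k3 : ℝ) ^ 2) + 2 / N ^ 4 * (k2 : ℝ) ^ 4) := by
    rw [Dmg, ← hs]
    field_simp
    ring
  rw [hexpand]
  exact habsorb.trans (le_add_of_nonneg_right (by positivity))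

-- The numerators of `Mhat1`, `Mhat2` and `Mhat3` all have this shape, with `p` equal to `k2 * k3`,
-- `-(k1 * k3)` and `0` respectively.
theorem abs_div_Dmg_le_mgConeBound {p u v : ℝ} (hN : N ≠ 0) (hk : |(k1 : ℝ)| ≤ a * |(k2 : ℝ)|)
    (hp : |p| ≤ kSq k1 k2 k3) (hu : |u| ≤ kSq k1 k2 k3) (hv : |v| ≤ kSq k1 k2 k3) :
    |(N ^ 4 * (p * kSq k1 k2 k3) + N ^ 2 * (u * v)) / Dmg N k1 k2 k3| ≤ mgConeBound N a := by
  set s := kSq k1 k2 k3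
  have hs0 : 0 ≤ s := kSq_nonneg k1 k2 k3
  have hnum : |N ^ 4 * (p * s) + N ^ 2 * (u * v)| ≤ (N ^ 4 + N ^ 2) * s ^ 2 := by
    calc |N ^ 4 * (p * s) + N ^ 2 * (u * v)|
        ≤ |N ^ 4 * (p * s)| + |N ^ 2 * (u * v)| := abs_add_le _ _
      _ = N ^ 4 * (|p| * s) + N ^ 2 * (|u| * |v|) := by
        simp only [abs_mul, abs_of_nonneg hs0, abs_of_nonneg (show 0 ≤ N ^ 4 by positivity),
          abs_of_nonneg (sq_nonneg N)]
      _ ≤ N ^ 4 * (s * s) + N ^ 2 * (s * s) := by gcongr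
      _ = (N ^ 4 + N ^ 2) * s ^ 2 := by ring
  rw [abs_div, abs_of_nonneg (Dmg_nonneg N k1 k2 k3)]
  refine div_le_of_le_mul₀ (Dmg_nonneg N k1 k2 k3) (mgConeBound_nonneg N a) (hnum.trans ?_)
  rw [mgConeBound, mul_assoc]
  gcongr
  exact kSq_sq_le_mul_Dmg hN hk

theorem abs_Mhat1_le_mgConeBound (hN : N ≠ 0) (hk : |(k1 : ℝ)| ≤ a * |(k2 : ℝ)|) :
    |Mhat1 N k1 k2 k3| ≤ mgConeBound N a := by
  unfold Mhat1
  split_ifs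
  · simpa only [abs_zero] using mgConeBound_nonneg N a
  · convert abs_div_Dmg_le_mgConeBound (u := -(k1 * k3)) (v := k2 ^ 2) hN hk
      (abs_k2_mul_k3_le_kSq k1 k2 k3)
      ((abs_neg _).trans_le (abs_k1_mul_k3_le_kSq k1 k2 k3))
      ((abs_sq _).trans_le (k2_sq_le_kSq k1 k2 k3)) using 3
    ring

theorem abs_Mhat2_le_mgConeBound (hN : N ≠ 0) (hk : |(k1 : ℝ)| ≤ a * |(k2 : ℝ)|) :
    |Mhat2 N k1 k2 k3| ≤ mgConeBound N a := by
  unfold Mhat2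
  split_ifs
  · simpa only [abs_zero] using mgConeBound_nonneg N a
  · convert abs_div_Dmg_le_mgConeBound (p := -(k1 * k3)) (u := -(k2 * k3)) (v := k2 ^ 2) hN hk
      ((abs_neg _).trans_le (abs_k1_mul_k3_le_kSq k1 k2 k3))
      ((abs_neg _).trans_le (abs_k2_mul_k3_le_kSq k1 k2 k3))
      ((abs_sq _).trans_le (k2_sq_le_kSq k1 k2 k3)) using 3
    ring

theorem abs_Mhat3_le_mgConeBound (hN : N ≠ 0) (hk : |(k1 : ℝ)| ≤ a * |(k2 : ℝ)|) :
    |Mhat3 N k1 k2 k3| ≤ mgConeBound N a := by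
  unfold Mhat3
  split_ifs
  · simpa only [abs_zero] using mgConeBound_nonneg N a
  · convert abs_div_Dmg_le_mgConeBound (p := 0) (u := k2 ^ 2) (v := k1 ^ 2 + k2 ^ 2) hN hk
      (abs_zero.trans_le (kSq_nonneg k1 k2 k3))
      ((abs_sq _).trans_le (k2_sq_le_kSq k1 k2 k3))
      ((abs_of_nonneg (by positivity)).trans_le (k1_sq_add_k2_sq_le_kSq k1 k2 k3)) using 3
    ring

end

theorem mg_symbol_bounded_on_frequency_plane_general {N a : ℝ} (hN : N ≠ 0)
    {k1 k2 k3 : ℤ} (hk : |(k1 : ℝ)| ≤ a * |(k2 : ℝ)|) :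
    |Mhat1 N k1 k2 k3| ≤ mgConeBound N a ∧ |Mhat2 N k1 k2 k3| ≤ mgConeBound N a ∧
      |Mhat3 N k1 k2 k3| ≤ mgConeBound N a :=
  ⟨abs_Mhat1_le_mgConeBound hN hk, abs_Mhat2_le_mgConeBound hN hk, abs_Mhat3_le_mgConeBound hN hk⟩

/-- **Uniform boundedness of the MG symbols on rational frequency planes:** for every
`N > 0` and every nonzero rational `q` there is a finite constant `C = C(q,N)` such that
`|M̂_j(k)| ≤ C` for `j = 1,2,3` and all `k = (k1,k2,k3) ∈ ℤ³` with `k3 ≠ 0` lying on the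
plane `P_q = {k : k2 = q·k1}`. -/
theorem mg_symbol_bounded_on_frequency_plane (N : ℝ) (hN : 0 < N) (q : ℚ) (hq : q ≠ 0) :
    ∃ C : ℝ, ∀ k1 k2 k3 : ℤ, k3 ≠ 0 → (k2 : ℚ) = q * (k1 : ℚ) →
      |Mhat1 N k1 k2 k3| ≤ C ∧ |Mhat2 N k1 k2 k3| ≤ C ∧ |Mhat3 N k1 k2 k3| ≤ C :=
  ⟨mgConeBound N |(q : ℝ)|⁻¹, fun _ _ _ _ hk =>
    mg_symbol_bounded_on_frequency_plane_general hN.ne'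
      (abs_eq_inv_mul_abs_of_eq_mul (Rat.cast_ne_zero.mpr hq) (by exact_mod_cast hk)).le⟩
end

section
/- Let N > 0, let m ≥ 1 be an integer, let ε_κ ≥ 0, and let j be a real number with j ≥ max(N⁴ m, 4m). Set k1 = j²/N² and k2 = j√m. Then (m N²/2) · k2²(k1² + k2²)/(4N⁴m²(k1² + k2² + 4m²) + k2⁴) − ε_κ √(k1² + k2² + 4m²) ≥ (j²/N²) · (1/26 − √3 ε_κ). In particular, if ε_κ < 1/(26√3), this lower bound tends to +∞ as j → ∞, uniformly in m and N. -/
/-!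
On the parabola `k2² = N² m k1` the two terms `N⁴ m² k1²` and `k2⁴` of the denominator coincide.
If moreover `N² m ≤ k1` and `2 m ≤ k1`, then `k1² ≤ k1² + k2² + 4 m² ≤ 3 k1²`, so the numerator is
at least `N⁴ m² k1³ / 2` and the denominator at most `(4 · 3 + 1) N⁴ m² k1²`. Growth thus beats
`k1 / 26`, while diffusion costs at most `√3 εκ k1`: for `γ = 1/2` both are linear in `k1`.
The choice `k1 = j² / N²`, `k2 = j √m` parametrizes the parabola.
-/

/-- The squared length of the wave vector `(k1, k2, 2m)`, whose square root is the symbol of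
`(-Δ)^{1/2}` there; `m` need not be an integer. -/
def mgWavevectorNormSq (m k1 k2 : ℝ) : ℝ :=
  k1 ^ 2 + k2 ^ 2 + 4 * m ^ 2

/-- The diffusion-free part of the lower bound for the unstable eigenvalue of the MG equation
linearized around `sin (m x₃)`, at horizontal frequencies `(k1, k2)`. -/
noncomputable def mgGrowthRate (N m k1 k2 : ℝ) : ℝ :=
  (m * N ^ 2 / 2) * (k2 ^ 2 * (k1 ^ 2 + k2 ^ 2))
    / (4 * N ^ 4 * m ^ 2 * mgWavevectorNormSq m k1 k2 + k2 ^ 4)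

section

variable {N m k1 k2 : ℝ}

theorem mgWavevectorNormSq_pos (hm : 0 < m) : 0 < mgWavevectorNormSq m k1 k2 := by
  unfold mgWavevectorNormSq
  positivity

theorem mgWavevectorNormSq_le_three_mul_sq (hk2 : k2 ^ 2 ≤ k1 ^ 2) (hm : (2 * m) ^ 2 ≤ k1 ^ 2) :
    mgWavevectorNormSq m k1 k2 ≤ 3 * k1 ^ 2 := by
  unfold mgWavevectorNormSq
  linarith

theorem sqrt_mgWavevectorNormSq_le {C : ℝ} (hk1 : 0 ≤ k1)
    (hC : mgWavevectorNormSq m k1 k2 ≤ C * k1 ^ 2) :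
    √(mgWavevectorNormSq m k1 k2) ≤ √C * k1 := by
  calc √(mgWavevectorNormSq m k1 k2) ≤ √(C * k1 ^ 2) := Real.sqrt_le_sqrt hC
    _ = √C * k1 := by rw [Real.sqrt_mul' C (sq_nonneg k1), Real.sqrt_sq hk1]

theorem mgGrowthRate_denominator_le {C : ℝ} (hk2 : k2 ^ 2 = N ^ 2 * m * k1)
    (hC : mgWavevectorNormSq m k1 k2 ≤ C * k1 ^ 2) :
    4 * N ^ 4 * m ^ 2 * mgWavevectorNormSq m k1 k2 + k2 ^ 4
      ≤ (4 * C + 1) * (N ^ 4 * m ^ 2 * k1 ^ 2) := by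
  have hk2_four : k2 ^ 4 = N ^ 4 * m ^ 2 * k1 ^ 2 := by
    linear_combination (k2 ^ 2 + N ^ 2 * m * k1) * hk2
  calc 4 * N ^ 4 * m ^ 2 * mgWavevectorNormSq m k1 k2 + k2 ^ 4
      ≤ 4 * N ^ 4 * m ^ 2 * (C * k1 ^ 2) + N ^ 4 * m ^ 2 * k1 ^ 2 := by
        rw [hk2_four]; gcongr
    _ = (4 * C + 1) * (N ^ 4 * m ^ 2 * k1 ^ 2) := by ring

theorem le_mgGrowthRate {C : ℝ} (hN : N ≠ 0) (hm : 0 < m) (hk1 : 0 < k1)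
    (hk2 : k2 ^ 2 = N ^ 2 * m * k1) (hC : mgWavevectorNormSq m k1 k2 ≤ C * k1 ^ 2) :
    k1 / (2 * (4 * C + 1)) ≤ mgGrowthRate N m k1 k2 := by
  have hnorm : 0 < mgWavevectorNormSq m k1 k2 := mgWavevectorNormSq_pos hm
  have hC_pos : 0 < C := pos_of_mul_pos_left (hnorm.trans_le hC) (sq_nonneg k1)
  unfold mgGrowthRate
  rw [le_div_iff₀ (by positivity)]
  calc k1 / (2 * (4 * C + 1)) * (4 * N ^ 4 * m ^ 2 * mgWavevectorNormSq m k1 k2 + k2 ^ 4)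
      ≤ k1 / (2 * (4 * C + 1)) * ((4 * C + 1) * (N ^ 4 * m ^ 2 * k1 ^ 2)) := by
        gcongr
        exact mgGrowthRate_denominator_le hk2 hC
    _ = m * N ^ 2 / 2 * (k2 ^ 2 * k1 ^ 2) := by rw [hk2]; field_simp
    _ ≤ m * N ^ 2 / 2 * (k2 ^ 2 * (k1 ^ 2 + k2 ^ 2)) := by
        gcongr
        exact le_add_of_nonneg_right (sq_nonneg k2)

theorem le_mgGrowthRate_sub_diffusion {εκ : ℝ} (hN : N ≠ 0) (hε : 0 ≤ εκ) (hm : 0 < m)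
    (hk2 : k2 ^ 2 = N ^ 2 * m * k1) (hNm : N ^ 2 * m ≤ k1) (hmk1 : 2 * m ≤ k1) :
    k1 * (1 / 26 - √3 * εκ) ≤ mgGrowthRate N m k1 k2 - εκ * √(mgWavevectorNormSq m k1 k2) := by
  have hk1 : 0 < k1 := by linarith
  have hk2_le : k2 ^ 2 ≤ k1 ^ 2 := by
    rw [hk2, sq k1]
    gcongr
  have hnorm : mgWavevectorNormSq m k1 k2 ≤ 3 * k1 ^ 2 :=
    mgWavevectorNormSq_le_three_mul_sq hk2_le (by gcongr)
  calc k1 * (1 / 26 - √3 * εκ) = k1 / (2 * (4 * 3 + 1)) - εκ * (√3 * k1) := by ring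
    _ ≤ mgGrowthRate N m k1 k2 - εκ * √(mgWavevectorNormSq m k1 k2) := by
        gcongr
        · exact le_mgGrowthRate hN hm hk1 hk2 hnorm
        · exact sqrt_mgWavevectorNormSq_le hk1.le hnorm

end

theorem mg_threshold_eigenvalue_lower_bound_general {N εκ m j : ℝ} (hN : N ≠ 0) (hε : 0 ≤ εκ)
    (hm : 0 < m) (hj : max (N ^ 4 * m) (4 * m) ≤ j ^ 2) :
    j ^ 2 / N ^ 2 * (1 / 26 - √3 * εκ) ≤
      mgGrowthRate N m (j ^ 2 / N ^ 2) (j * √m)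
        - εκ * √(mgWavevectorNormSq m (j ^ 2 / N ^ 2) (j * √m)) := by
  obtain ⟨hNj, hmj⟩ := max_le_iff.mp hj
  have hN_sq : 0 < N ^ 2 := by positivity
  have hk2 : (j * √m) ^ 2 = N ^ 2 * m * (j ^ 2 / N ^ 2) := by
    rw [mul_pow, Real.sq_sqrt hm.le]
    field_simp
  have hNm : N ^ 2 * m ≤ j ^ 2 / N ^ 2 := by
    rw [le_div_iff₀ hN_sq]
    linarith
  -- AM-GM: `4 N² m ≤ N⁴ m + 4 m ≤ 2 j²`
  have hmk1 : 2 * m ≤ j ^ 2 / N ^ 2 := by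
    rw [le_div_iff₀ hN_sq]
    linarith [mul_nonneg hm.le (sq_nonneg (N ^ 2 - 2))]
  exact le_mgGrowthRate_sub_diffusion hN hε hm hk2 hNm hmk1

/-- **Key estimate for the threshold case `γ = 1/2`:** let `N > 0`, `m ≥ 1` an integer,
`ε_κ ≥ 0`, and let `j` be a real number with `j ≥ max(N⁴m, 4m)`.  With `k1 = j²/N²` and
`k2 = j√m`,
`(mN²/2)·k2²(k1²+k2²)/(4N⁴m²(k1²+k2²+4m²)+k2⁴) − ε_κ√(k1²+k2²+4m²)
  ≥ (j²/N²)·(1/26 − √3 ε_κ)`. -/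
theorem mg_threshold_eigenvalue_lower_bound (N εκ : ℝ) (hN : 0 < N) (hε : 0 ≤ εκ)
    (m : ℕ) (hm : 1 ≤ m) (j : ℝ) (hj : max (N ^ 4 * (m : ℝ)) (4 * (m : ℝ)) ≤ j)
    (k1 k2 : ℝ) (hk1 : k1 = j ^ 2 / N ^ 2) (hk2 : k2 = j * Real.sqrt (m : ℝ)) :
    (j ^ 2 / N ^ 2) * (1 / 26 - Real.sqrt 3 * εκ) ≤
      ((m : ℝ) * N ^ 2 / 2) * (k2 ^ 2 * (k1 ^ 2 + k2 ^ 2))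
          / (4 * N ^ 4 * (m : ℝ) ^ 2 * (k1 ^ 2 + k2 ^ 2 + 4 * (m : ℝ) ^ 2) + k2 ^ 4)
        - εκ * Real.sqrt (k1 ^ 2 + k2 ^ 2 + 4 * (m : ℝ) ^ 2) := by
  have hm_real : (1 : ℝ) ≤ m := by exact_mod_cast hm
  have hj_one : 1 ≤ j := by linarith [(le_max_right _ _).trans hj]
  subst hk1 hk2
  exact mg_threshold_eigenvalue_lower_bound_general hN.ne' hε (by positivity)
    (hj.trans (le_self_pow₀ hj_one two_ne_zero))
end
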